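/- Let F be a finite field with q elements and let x ≥ 1. Let Λ = Hom_F(F^x, F) be the space of linear functionals on F^x, and let M be the set of pairs (u, L) where u ∈ Hom_F(F^x, F) and L is a 1-dimensional subspace of F^x with L not contained in ker u. Then there exists a family of bijections Θ_y : (Λ × VI(x,y)) ⊔ (M × VI(x−1,y)) → VI(x,1+y), one for each integer y ≥ 0, such that for every injective F-linear map g : F^y → F^{y′} one has Θ_{y′}(λ, g∘α) = (id_F ⊕ g) ∘ Θ_y(λ, α) for every λ ∈ Λ, α ∈ VI(x,y), and Θ_{y′}((u,L), g∘β) = (id_F ⊕ g) ∘ Θ_y((u,L), β) for every (u,L) ∈ M, β ∈ VI(x−1,y). (Here |Λ| = q^x and |M| = (q^x − 1)q^{x−1}.) -/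

import Mathlib

/-- The linear map `id_F ⊕ g : F^{1+a} = F ⊕ F^a → F ⊕ F^b = F^{1+b}` associated to a linear
map `g : F^a → F^b`; we model `F^n` as `Fin n → F`, with the first summand `F` corresponding
to the coordinate `0`. -/
def oplus {F : Type} [Field F] {a b : ℕ} (g : (Fin a → F) →ₗ[F] (Fin b → F)) :
    (Fin (a + 1) → F) →ₗ[F] (Fin (b + 1) → F) where
  toFun v := Fin.cons (v 0) (g (v ∘ Fin.succ))
  map_add' u v := by
    have h : (u + v) ∘ Fin.succ = u ∘ Fin.succ + v ∘ Fin.succ := rfl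
    funext i
    induction i using Fin.cases with
    | zero => simp
    | succ i => simp [h]
  map_smul' t v := by
    have h : (t • v) ∘ Fin.succ = t • (v ∘ Fin.succ) := rfl
    funext i
    induction i using Fin.cases with
    | zero => simp
    | succ i => simp [h]

/-- The projection `π : F^{1+y} = F ⊕ F^y → F^y` onto the second summand. -/
def sndProj (F : Type) [Field F] (y : ℕ) : (Fin (y + 1) → F) →ₗ[F] (Fin y → F) :=
  LinearMap.funLeft F F Fin.succ

theorem oplus_injective {F : Type} [Field F] {a b : ℕ}
    {g : (Fin a → F) →ₗ[F] (Fin b → F)} (hg : Function.Injective g) :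
    Function.Injective (oplus g) := by
  intro u v huv
  have h0 : u 0 = v 0 := by
    have := congrFun huv 0
    simpa [oplus] using this
  have hs : u ∘ Fin.succ = v ∘ Fin.succ := by
    apply hg
    funext i
    have := congrFun huv i.succ
    simpa [oplus] using this
  funext i
  induction i using Fin.cases with
  | zero => exact h0
  | succ i => exact congrFun hs i

/-- The set of injective linear maps `F^a → F^b`. -/
def VIHom (F : Type) [Field F] (a b : ℕ) : Type :=
  { g : (Fin a → F) →ₗ[F] (Fin b → F) // Function.Injective g }

/-- Composition of injective linear maps. -/
def VIcomp {F : Type} [Field F] {a b c : ℕ} (g : VIHom F b c) (α : VIHom F a b) :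
    VIHom F a c :=
  ⟨g.1.comp α.1, g.2.comp α.2⟩

/-- `id_F ⊕ g` as an injective linear map. -/
def VIshift {F : Type} [Field F] {a b : ℕ} (g : VIHom F a b) : VIHom F (a + 1) (b + 1) :=
  ⟨oplus g.1, oplus_injective g.2⟩

/-- Combine a functional `u` and a map `ψ` into a map to `F^{1+y}`. -/
def consMap {F : Type} [Field F] {n y : ℕ} (u : (Fin n → F) →ₗ[F] F)
    (ψ : (Fin n → F) →ₗ[F] (Fin y → F)) : (Fin n → F) →ₗ[F] (Fin (y + 1) → F) :=
  LinearMap.pi (Fin.cons u (fun i => (LinearMap.proj i).comp ψ))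

theorem consMap_zero {F : Type} [Field F] {n y : ℕ} (u : (Fin n → F) →ₗ[F] F)
    (ψ : (Fin n → F) →ₗ[F] (Fin y → F)) (v) : consMap u ψ v 0 = u v := by
  simp [consMap]

theorem consMap_succ {F : Type} [Field F] {n y : ℕ} (u : (Fin n → F) →ₗ[F] F)
    (ψ : (Fin n → F) →ₗ[F] (Fin y → F)) (v) (i : Fin y) : consMap u ψ v i.succ = ψ v i := by
  simp [consMap]

theorem consMap_inj {F : Type} [Field F] {n y : ℕ} {u u' : (Fin n → F) →ₗ[F] F}
    {ψ ψ' : (Fin n → F) →ₗ[F] (Fin y → F)} (h : consMap u ψ = consMap u' ψ') :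
    u = u' ∧ ψ = ψ' := by
  constructor
  · refine LinearMap.ext fun v => ?_
    rw [← consMap_zero u ψ, h, consMap_zero]
  · refine LinearMap.ext fun v => funext fun i => ?_
    rw [← consMap_succ u ψ, h, consMap_succ]

theorem consMap_surj {F : Type} [Field F] {n y : ℕ} (φ : (Fin n → F) →ₗ[F] (Fin (y + 1) → F)) :
    ∃ u ψ, φ = consMap u ψ := by
  refine ⟨(LinearMap.proj 0).comp φ, (sndProj F y).comp φ, ?_⟩
  refine LinearMap.ext fun v => funext fun i => ?_
  induction i using Fin.cases with
  | zero => rw [consMap_zero]; rfl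
  | succ i => rw [consMap_succ]; rfl

theorem consMap_eq_zero {F : Type} [Field F] {n y : ℕ} {u : (Fin n → F) →ₗ[F] F}
    {ψ : (Fin n → F) →ₗ[F] (Fin y → F)} {v} : consMap u ψ v = 0 ↔ u v = 0 ∧ ψ v = 0 := by
  constructor
  · intro h
    refine ⟨by rw [← consMap_zero u ψ, h]; rfl, funext fun i => ?_⟩
    rw [← consMap_succ u ψ, h]; rfl
  · rintro ⟨h, h'⟩
    funext i
    induction i using Fin.cases with
    | zero => rw [consMap_zero, h]; rfl
    | succ i => rw [consMap_succ, h']; rfl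

theorem oplus_consMap {F : Type} [Field F] {n y y' : ℕ} (u : (Fin n → F) →ₗ[F] F)
    (ψ : (Fin n → F) →ₗ[F] (Fin y → F)) (g : (Fin y → F) →ₗ[F] (Fin y' → F)) :
    (oplus g).comp (consMap u ψ) = consMap u (g.comp ψ) := by
  refine LinearMap.ext fun v => funext fun i => ?_
  have h : (consMap u ψ v) ∘ Fin.succ = ψ v := funext fun i => consMap_succ u ψ v i
  induction i using Fin.cases with
  | zero => rw [consMap_zero]; simp [oplus, consMap_zero]
  | succ i => rw [consMap_succ]; simp [oplus, h]

theorem exists_quot {F : Type} [Field F] {x : ℕ} (L : Submodule F (Fin (x + 1) → F))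
    (hL : Module.finrank F L = 1) :
    ∃ p : (Fin (x + 1) → F) →ₗ[F] (Fin x → F), LinearMap.ker p = L ∧ Function.Surjective p := by
  have h := L.finrank_quotient_add_finrank
  have h2 : Module.finrank F ((Fin (x + 1) → F) ⧸ L) = Module.finrank F (Fin x → F) := by
    simp at h ⊢; omega
  let e := LinearEquiv.ofFinrankEq _ _ h2
  refine ⟨e.toLinearMap.comp L.mkQ, ?_, ?_⟩
  · rw [LinearEquiv.ker_comp, Submodule.ker_mkQ]
  · exact e.surjective.comp L.mkQ_surjective

/-- A functional nonzero on a line takes a nonzero value on each nonzero vector. -/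
theorem line_inter {F V : Type} [Field F] [AddCommGroup V] [Module F V] {L : Submodule F V}
    (hL : Module.finrank F L = 1) {u : V →ₗ[F] F} (hu : ¬ L ≤ LinearMap.ker u)
    {v : V} (hv : v ∈ L) (h : u v = 0) : v = 0 := by
  by_contra hne
  apply hu
  intro w hw
  obtain ⟨c, hc⟩ := (finrank_eq_one_iff_of_nonzero' (⟨v, hv⟩ : L)
    (by simpa using hne)).1 hL ⟨w, hw⟩
  have : w = c • v := by simpa using (congrArg Subtype.val hc).symm
  rw [LinearMap.mem_ker, this, map_smul, h, smul_zero]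

/-- The set `M`. -/
abbrev MSet (F : Type) [Field F] (x : ℕ) : Type :=
  { uL : ((Fin (x + 1) → F) →ₗ[F] F) × Submodule F (Fin (x + 1) → F) //
              Module.finrank F uL.2 = 1 ∧ ¬ uL.2 ≤ LinearMap.ker uL.1 }

noncomputable def quotMap {F : Type} [Field F] {x : ℕ} (m : MSet F x) :
    (Fin (x + 1) → F) →ₗ[F] (Fin x → F) := (exists_quot m.1.2 m.2.1).choose

theorem quotMap_ker {F : Type} [Field F] {x : ℕ} (m : MSet F x) :
    LinearMap.ker (quotMap m) = m.1.2 := (exists_quot m.1.2 m.2.1).choose_spec.1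

theorem quotMap_surj {F : Type} [Field F] {x : ℕ} (m : MSet F x) :
    Function.Surjective (quotMap m) := (exists_quot m.1.2 m.2.1).choose_spec.2

noncomputable def thetaFun (F : Type) [Field F] (x y : ℕ) :
    ((((Fin (x + 1) → F) →ₗ[F] F) × VIHom F (x + 1) y) ⊕ (MSet F x × VIHom F x y)) →
        VIHom F (x + 1) (y + 1)
  | Sum.inl (lam, α) => ⟨consMap lam α.1, by
      rw [injective_iff_map_eq_zero]
      intro v hv
      exact (injective_iff_map_eq_zero α.1).1 α.2 v (consMap_eq_zero.1 hv).2⟩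
  | Sum.inr (m, β) => ⟨consMap m.1.1 (β.1.comp (quotMap m)), by
      rw [injective_iff_map_eq_zero]
      intro v hv
      obtain ⟨h1, h2⟩ := consMap_eq_zero.1 hv
      have h3 := (injective_iff_map_eq_zero β.1).1 β.2 _ h2
      rw [← LinearMap.mem_ker, quotMap_ker] at h3
      exact line_inter m.2.1 m.2.2 h3 h1⟩

theorem ker_comp_quot {F : Type} [Field F] {x y : ℕ} (m : MSet F x) (β : VIHom F x y) :
    LinearMap.ker (β.1.comp (quotMap m)) = m.1.2 := by
  rw [LinearMap.ker_comp, LinearMap.ker_eq_bot.2 β.2, ← quotMap_ker m]; rfl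

theorem MSet_ne_bot {F : Type} [Field F] {x : ℕ} (m : MSet F x) : m.1.2 ≠ ⊥ := by
  intro h
  exact m.2.2 (h ▸ bot_le)

theorem theta_bij (F : Type) [Field F] (x y : ℕ) : Function.Bijective (thetaFun F x y) := by
  constructor
  · rintro (⟨l, α⟩ | ⟨m, β⟩) (⟨l', α'⟩ | ⟨m', β'⟩) h
    · obtain ⟨h1, h2⟩ := consMap_inj (congrArg Subtype.val h)
      rw [h1, Subtype.ext h2]
    · obtain ⟨h1, h2⟩ := consMap_inj (congrArg Subtype.val h)
      exact absurd (by rw [← ker_comp_quot m' β', ← h2, LinearMap.ker_eq_bot.2 α.2])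
        (MSet_ne_bot m')
    · obtain ⟨h1, h2⟩ := consMap_inj (congrArg Subtype.val h)
      exact absurd (by rw [← ker_comp_quot m β, h2, LinearMap.ker_eq_bot.2 α'.2])
        (MSet_ne_bot m)
    · obtain ⟨h1, h2⟩ := consMap_inj (congrArg Subtype.val h)
      have hm : m = m' := by
        refine Subtype.ext (Prod.ext h1 ?_)
        rw [← ker_comp_quot m β, h2, ker_comp_quot]
      subst hm
      have : β = β' := by
        refine Subtype.ext (LinearMap.ext fun w => ?_)
        obtain ⟨v, rfl⟩ := quotMap_surj m w
        exact LinearMap.congr_fun h2 v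
      rw [this]
  · rintro ⟨φ, hφ⟩
    obtain ⟨u, ψ, rfl⟩ := consMap_surj φ
    by_cases hψ : Function.Injective ψ
    · exact ⟨Sum.inl (u, ⟨ψ, hψ⟩), rfl⟩
    · have hk : LinearMap.ker ψ ≠ ⊥ := fun h => hψ (LinearMap.ker_eq_bot.1 h)
      have hz : ∀ v, u v = 0 → ψ v = 0 → v = 0 := fun v h1 h2 =>
        (injective_iff_map_eq_zero _).1 hφ v (consMap_eq_zero.2 ⟨h1, h2⟩)
      have hu : ¬ LinearMap.ker ψ ≤ LinearMap.ker u := by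
        intro h
        exact hk ((Submodule.eq_bot_iff _).2 fun v hv => hz v (h hv) hv)
      have hf : Module.finrank F (LinearMap.ker ψ) = 1 := by
        apply le_antisymm
        · have := LinearMap.finrank_le_finrank_of_injective
            (f := u.comp (LinearMap.ker ψ).subtype) (by
              rw [injective_iff_map_eq_zero]
              rintro ⟨v, hv⟩ h
              exact Subtype.ext (hz v h hv))
          simpa using this
        · exact Submodule.one_le_finrank_iff.2 hk
      let m : MSet F x := ⟨(u, LinearMap.ker ψ), hf, hu⟩
      obtain ⟨s, hs⟩ := (quotMap m).exists_rightInverse_of_surjective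
        (LinearMap.range_eq_top.2 (quotMap_surj m))
      have hs' : ∀ w, quotMap m (s w) = w := fun w => LinearMap.congr_fun hs w
      have hker : ∀ v, quotMap m v = 0 ↔ ψ v = 0 := fun v => by
        rw [← LinearMap.mem_ker, quotMap_ker]; rfl
      refine ⟨Sum.inr (m, ⟨ψ.comp s, ?_⟩), ?_⟩
      · rw [injective_iff_map_eq_zero]
        intro w hw
        rw [← hs' w]
        exact (hker _).2 hw
      · refine Subtype.ext ?_
        change consMap u ((ψ.comp s).comp (quotMap m)) = consMap u ψ
        congr 1
        refine LinearMap.ext fun v => ?_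
        rw [← sub_eq_zero]
        change ψ (s (quotMap m v)) - ψ v = 0
        rw [← map_sub, ← hker, map_sub, hs', sub_self]

/-- `M` is the set of pairs `(u, v)` with `u v = 1`. -/
theorem exists_unit {F : Type} [Field F] {x : ℕ} (m : MSet F x) :
    ∃ v ∈ m.1.2, m.1.1 v = 1 := by
  obtain ⟨w, hw, hne⟩ := SetLike.not_le_iff_exists.1 m.2.2
  rw [LinearMap.mem_ker] at hne
  exact ⟨(m.1.1 w)⁻¹ • w, m.1.2.smul_mem _ hw, by simp [hne]⟩

noncomputable def MSetEquiv (F : Type) [Field F] (x : ℕ) :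
    (Σ u : (Fin (x + 1) → F) →ₗ[F] F, {v : Fin (x + 1) → F // u v = 1}) ≃ MSet F x := by
  refine Equiv.ofBijective (fun p => ⟨(p.1, Submodule.span F {p.2.1}), ?_, ?_⟩) ⟨?_, ?_⟩
  · refine finrank_span_singleton ?_
    intro h
    have := p.2.2
    simp [h] at this
  · intro h
    have := h (Submodule.mem_span_singleton_self p.2.1)
    rw [LinearMap.mem_ker, p.2.2] at this
    exact one_ne_zero this
  · rintro ⟨u, v, hv⟩ ⟨u', v', hv'⟩ h
    have h := congrArg Subtype.val h
    obtain ⟨rfl, h2⟩ := Prod.mk.inj h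
    have h3 : v ∈ Submodule.span F {v'} := by
      have h4 := Submodule.mem_span_singleton_self (R := F) v
      simp only at h2
      rwa [h2] at h4
    obtain ⟨c, rfl⟩ := Submodule.mem_span_singleton.1 h3
    have : c = 1 := by simpa [hv'] using hv
    subst this
    simp
  · intro m
    obtain ⟨v, hv, h1⟩ := exists_unit m
    refine ⟨⟨m.1.1, v, h1⟩, Subtype.ext (Prod.ext rfl ?_)⟩
    apply le_antisymm
    · simpa [Submodule.span_singleton_le_iff_mem] using hv
    · intro w hw
      have : w - m.1.1 w • v = 0 := line_inter m.2.1 m.2.2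
        (m.1.2.sub_mem hw (m.1.2.smul_mem _ hv)) (by simp [h1])
      exact Submodule.mem_span_singleton.2 ⟨m.1.1 w, (sub_eq_zero.1 this).symm⟩

theorem card_fiber (F : Type) [Field F] [Fintype F] (x : ℕ) (u : (Fin (x + 1) → F) →ₗ[F] F)
    (hu : u ≠ 0) : Nat.card {v : Fin (x + 1) → F // u v = 1} = Fintype.card F ^ x := by
  have hs : Function.Surjective u := LinearMap.surjective hu
  obtain ⟨v₀, h₀⟩ := hs 1
  have e : {v : Fin (x + 1) → F // u v = 1} ≃ LinearMap.ker u :=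
    { toFun := fun v => ⟨v.1 - v₀, by simp [v.2, h₀]⟩
      invFun := fun w => ⟨w.1 + v₀, by
        have := w.2
        rw [LinearMap.mem_ker] at this
        simp [this, h₀]⟩
      left_inv := fun v => by simp
      right_inv := fun w => by simp }
  have hr := u.finrank_range_add_finrank_ker
  rw [LinearMap.range_eq_top.2 hs, finrank_top] at hr
  have hk : Module.finrank F (LinearMap.ker u) = x := by
    simp at hr; omega
  rw [Nat.card_congr e, Module.natCard_eq_pow_finrank (K := F), hk, Nat.card_eq_fintype_card]

theorem card_dual (F : Type) [Field F] [Fintype F] (x : ℕ) :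
    Nat.card ((Fin (x + 1) → F) →ₗ[F] F) = Fintype.card F ^ (x + 1) := by
  rw [Module.natCard_eq_pow_finrank (K := F), Nat.card_eq_fintype_card]
  simp [Module.finrank_linearMap]

theorem card_MSet (F : Type) [Field F] [Fintype F] (x : ℕ) :
    Nat.card (MSet F x) = (Fintype.card F ^ (x + 1) - 1) * Fintype.card F ^ x := by
  classical
  haveI : Finite ((Fin (x + 1) → F) →ₗ[F] F) := Module.finite_of_finite F
  haveI := Fintype.ofFinite ((Fin (x + 1) → F) →ₗ[F] F)
  rw [← Nat.card_congr (MSetEquiv F x), Nat.card_sigma,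
    ← Finset.add_sum_erase _ _ (Finset.mem_univ (0 : (Fin (x + 1) → F) →ₗ[F] F)),
    Finset.sum_congr rfl (fun u hu => card_fiber F x u (Finset.ne_of_mem_erase hu)),
    Finset.sum_const, Finset.card_erase_of_mem (Finset.mem_univ _), Finset.card_univ,
    ← Nat.card_eq_fintype_card (α := (Fin (x + 1) → F) →ₗ[F] F), card_dual]
  simp

/-- Let `F` be a finite field with `q` elements and `x ≥ 1` (the paper's
`x` is our `x+1`).  Let `Λ = Hom_F(F^x, F)` and let `M` be the set of pairs `(u, L)` with
`u ∈ Hom_F(F^x, F)` and `L ⊆ F^x` a 1-dimensional subspace not contained in `ker u`.  Then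
there is a family of bijections `Θ_y : (Λ × VI(x,y)) ⊔ (M × VI(x−1,y)) → VI(x,1+y)`, `y ∈ ℕ`,
natural with respect to postcomposition by injective linear maps `g : F^y → F^{y′}`:
`Θ_{y′}(λ, g∘α) = (id_F ⊕ g) ∘ Θ_y(λ, α)` and `Θ_{y′}((u,L), g∘β) = (id_F ⊕ g) ∘ Θ_y((u,L), β)`.
Moreover `|Λ| = q^x` and `|M| = (q^x − 1)·q^{x−1}`. -/
theorem stmt15 (F : Type) [Field F] [Fintype F] (q : ℕ) (hq : Fintype.card F = q) (x : ℕ) :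
    (∃ Θ : ∀ y : ℕ,
        ((((Fin (x + 1) → F) →ₗ[F] F) × VIHom F (x + 1) y) ⊕
          ({ uL : ((Fin (x + 1) → F) →ₗ[F] F) × Submodule F (Fin (x + 1) → F) //
              Module.finrank F uL.2 = 1 ∧ ¬ uL.2 ≤ LinearMap.ker uL.1 } × VIHom F x y)) ≃
        VIHom F (x + 1) (y + 1),
      ∀ (y y' : ℕ) (g : VIHom F y y'),
        (∀ (lam : (Fin (x + 1) → F) →ₗ[F] F) (α : VIHom F (x + 1) y),
          Θ y' (Sum.inl (lam, VIcomp g α)) = VIcomp (VIshift g) (Θ y (Sum.inl (lam, α)))) ∧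
        (∀ (uL : { uL : ((Fin (x + 1) → F) →ₗ[F] F) × Submodule F (Fin (x + 1) → F) //
              Module.finrank F uL.2 = 1 ∧ ¬ uL.2 ≤ LinearMap.ker uL.1 })
           (β : VIHom F x y),
          Θ y' (Sum.inr (uL, VIcomp g β)) = VIcomp (VIshift g) (Θ y (Sum.inr (uL, β))))) ∧
    Nat.card ((Fin (x + 1) → F) →ₗ[F] F) = q ^ (x + 1) ∧
    Nat.card { uL : ((Fin (x + 1) → F) →ₗ[F] F) × Submodule F (Fin (x + 1) → F) //
        Module.finrank F uL.2 = 1 ∧ ¬ uL.2 ≤ LinearMap.ker uL.1 } =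
      (q ^ (x + 1) - 1) * q ^ x := by
  subst hq
  refine ⟨⟨fun y => Equiv.ofBijective (thetaFun F x y) (theta_bij F x y), ?_⟩,
    card_dual F x, card_MSet F x⟩
  intro y y' g
  refine ⟨fun lam α => Subtype.ext ?_, fun uL β => Subtype.ext ?_⟩
  · exact (oplus_consMap lam α.1 g.1).symm
  · exact (oplus_consMap uL.1.1 (β.1.comp (quotMap uL)) g.1).symm
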